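/- Define the Markov chain V̄_{n+1} = (1−β)(V̄_n^{1−k} + α(1−k)Ḡ_{V̄_n})^{1/(1−k)} on [0,∞), where 0 < β < 1, k = 3/4, α > 0, and conditionally on V̄_n = x, Ḡ_x has the complementary CDF exp(−xy − 2α(1−k)x^k y² − 2α²(1−k)² x^{2k−1} y³ − α³(1−k)³ x^{3k−2} y⁴ − α⁴(1−k)⁴ x^{4k−3} y⁵/5). Then for every n and every starting state, V̄_n^{1−k} is stochastically dominated by X_n, where X_{n+1} = (1−β)^{1−k}(X_n + α(1−k)η_n) with η_n i.i.d. distributed as Ḡ_0 and X₀ = V̄₀^{1−k}. Consequently the family of Cesàro averages (1/n)Σ_{i=1}^n P_x(V̄_i ∈ ·) is tight, and {V̄_n} admits an invariant probability distribution. -/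

import Mathlib

open Real MeasureTheory Set

lemma tcp_exp_prob : IsProbabilityMeasure (ProbabilityTheory.expMeasure 1) :=
  ProbabilityTheory.isProbabilityMeasure_expMeasure one_pos

lemma tcp_exp_noatoms : NullSingletonClass (ProbabilityTheory.expMeasure 1) := by
  unfold ProbabilityTheory.expMeasure ProbabilityTheory.gammaMeasure
  infer_instance

lemma tcp_exp_Ici (y : ℝ) (hy : 0 ≤ y) :
    (ProbabilityTheory.expMeasure 1) (Ici y) = ENNReal.ofReal (Real.exp (-y)) := by
  have := tcp_exp_prob
  have := tcp_exp_noatoms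
  have h1 := ProbabilityTheory.cdf_expMeasure_eq (r := 1) one_pos y
  rw [ProbabilityTheory.cdf_eq_real, if_pos hy, one_mul] at h1
  have h2 : (ProbabilityTheory.expMeasure 1).real (Ioi y) = Real.exp (-y) := by
    rw [← compl_Iic, probReal_compl_eq_one_sub measurableSet_Iic, h1]; ring
  rw [← measure_congr Ioi_ae_eq_Ici, ← h2]
  simp

lemma tcp_exp_nonneg : ∀ᵐ e ∂(ProbabilityTheory.expMeasure 1), (0:ℝ) ≤ e := by
  have := tcp_exp_prob
  have h := tcp_exp_Ici 0 le_rfl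
  simp only [neg_zero, Real.exp_zero, ENNReal.ofReal_one] at h
  exact (prob_compl_eq_zero_iff measurableSet_Ici).2 h

lemma tcp_exp_mean : ∫⁻ e, ENNReal.ofReal e ∂(ProbabilityTheory.expMeasure 1) ≠ ⊤ := by
  unfold ProbabilityTheory.expMeasure ProbabilityTheory.gammaMeasure
  rw [lintegral_withDensity_eq_lintegral_mul]
  · have h := (Real.GammaIntegral_convergent (s := 2) (by norm_num)).2
    have : ∫⁻ a, (ProbabilityTheory.gammaPDF 1 1 * fun e => ENNReal.ofReal e) a
        ≤ ∫⁻ x in Ioi (0:ℝ), ‖rexp (-x) * x ^ ((2:ℝ) - 1)‖ₑ := by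
      rw [← lintegral_indicator measurableSet_Ioi]
      apply lintegral_mono
      intro e
      by_cases he : 0 < e
      · rw [indicator_of_mem (show e ∈ Ioi (0:ℝ) from he)]
        simp only [Pi.mul_apply, ProbabilityTheory.gammaPDF_of_nonneg he.le]
        rw [← ENNReal.ofReal_mul (by simp [Real.exp_nonneg]), ← ofReal_norm]
        apply ENNReal.ofReal_le_ofReal
        have : (2:ℝ) - 1 = 1 := by norm_num
        rw [this]
        simp [abs_of_pos he]
      · simp [ENNReal.ofReal_of_nonpos (not_lt.1 he)]
    exact ne_top_of_le_ne_top h.ne this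
  · exact (ProbabilityTheory.measurable_gammaPDFReal 1 1).ennreal_ofReal
  · exact ENNReal.measurable_ofReal

lemma tcp_nu_eq (c u : ℝ) (hc : 0 < c) (hu : 0 ≤ u) (m : Measure ℝ) [IsProbabilityMeasure m]
    (h : ∀ y : ℝ, 0 ≤ y → (m (Ici y)).toReal = Real.exp (-(((u + c * y) ^ 5 - u ^ 5) / (5 * c)))) :
    m = (ProbabilityTheory.expMeasure 1).map
      (fun e => ((u ^ 5 + 5 * c * e) ^ (1 / 5 : ℝ) - u) / c) := by
  have := tcp_exp_prob
  have hm : Measurable (fun e : ℝ => ((u ^ 5 + 5 * c * e) ^ (1 / 5 : ℝ) - u) / c) := by fun_prop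
  have : IsProbabilityMeasure ((ProbabilityTheory.expMeasure 1).map
      (fun e => ((u ^ 5 + 5 * c * e) ^ (1 / 5 : ℝ) - u) / c)) :=
    Measure.isProbabilityMeasure_map hm.aemeasurable
  have key : ∀ y : ℝ, 0 ≤ y → m (Ici y) = (ProbabilityTheory.expMeasure 1).map
      (fun e => ((u ^ 5 + 5 * c * e) ^ (1 / 5 : ℝ) - u) / c) (Ici y) := by
    intro y hy
    have hcy : 0 ≤ c * y := by positivity
    have hH : 0 ≤ ((u + c * y) ^ 5 - u ^ 5) / (5 * c) := by
      have : u ^ 5 ≤ (u + c * y) ^ 5 := by gcongr; linarith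
      apply div_nonneg <;> linarith
    rw [← ENNReal.ofReal_toReal (measure_ne_top m (Ici y)), h y hy, ← tcp_exp_Ici _ hH,
      Measure.map_apply hm measurableSet_Ici]
    apply measure_congr
    filter_upwards [tcp_exp_nonneg] with e he
    apply propext
    change (_ ≤ e) ↔ (y ≤ _)
    have hb : 0 ≤ u ^ 5 + 5 * c * e := by positivity
    have h5 : ((u ^ 5 + 5 * c * e) ^ (1 / 5 : ℝ)) ^ 5 = u ^ 5 + 5 * c * e := by
      rw [← Real.rpow_natCast, ← Real.rpow_mul hb]; norm_num
    rw [div_le_iff₀ (by positivity), le_div_iff₀ hc, le_sub_iff_add_le]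
    rw [← pow_le_pow_iff_left₀ (a := y * c + u) (by nlinarith) (by positivity)
      (by norm_num : (5:ℕ) ≠ 0), h5, mul_comm y c, add_comm (c * y) u]
    constructor <;> intro h <;> linarith
  apply Measure.ext_of_Ici
  intro y
  rcases le_or_gt 0 y with hy | hy
  · exact key y hy
  · have h0 : m (Ici 0) = 1 := by
      have := h 0 le_rfl
      simp at this
      rw [← ENNReal.ofReal_toReal (measure_ne_top m (Ici 0)), this]; simp
    have h0' := (key 0 le_rfl).symm.trans h0
    have hs : Ici (0:ℝ) ⊆ Ici y := Ici_subset_Ici.2 hy.le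
    rw [le_antisymm prob_le_one (h0 ▸ measure_mono hs : 1 ≤ m (Ici y)),
      le_antisymm prob_le_one (h0' ▸ measure_mono hs)]

lemma tcp_bind_eq (μ : Measure ℝ) [IsProbabilityMeasure μ] (κ : ℝ → Measure ℝ) (h : ℝ × ℝ → ℝ)
    (hh : Measurable h)
    (hκ : ∀ᵐ v ∂μ, κ v = (ProbabilityTheory.expMeasure 1).map (fun e => h (v, e))) :
    μ.bind κ = (μ.prod (ProbabilityTheory.expMeasure 1)).map h := by
  have := tcp_exp_prob
  rw [Measure.bind_congr_right hκ]
  have hk : Measurable (fun v => (ProbabilityTheory.expMeasure 1).map (fun e => h (v, e))) := by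
    apply Measure.measurable_of_measurable_coe
    intro s hs
    have : (fun v => ((ProbabilityTheory.expMeasure 1).map (fun e => h (v, e))) s)
      = fun v => (ProbabilityTheory.expMeasure 1) (Prod.mk v ⁻¹' (h ⁻¹' s)) := by
      ext v
      rw [Measure.map_apply (by fun_prop) hs]; rfl
    rw [this]
    exact measurable_measure_prodMk_left (hh hs)
  ext s hs
  rw [Measure.bind_apply hs hk.aemeasurable, Measure.map_apply hh hs, Measure.prod_apply (hh hs)]
  congr 1
  ext v
  rw [Measure.map_apply (by fun_prop) hs]; rfl

lemma tcp_cons (Q : Measure ℝ) [IsProbabilityMeasure Q] :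
    ((Measure.infinitePi (fun _ : ℕ => Q)).prod Q).map
      (fun p : (ℕ → ℝ) × ℝ => (fun n : ℕ => Nat.casesOn n p.2 p.1 : ℕ → ℝ))
      = Measure.infinitePi (fun _ : ℕ => Q) := by
  have hm : Measurable (fun p : (ℕ → ℝ) × ℝ => (fun n : ℕ => Nat.casesOn n p.2 p.1 : ℕ → ℝ)) := by
    rw [measurable_pi_iff]
    intro n
    cases n with
    | zero => exact measurable_snd
    | succ n => exact (measurable_pi_apply n).comp measurable_fst
  apply Measure.eq_infinitePi
  intro s t ht
  classical
  obtain ⟨N, hN⟩ := s.exists_nat_subset_range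
  have hN' : s ⊆ Finset.range (N + 1) := hN.trans (Finset.range_mono (Nat.le_succ N))
  set t' : ℕ → Set ℝ := fun i => if i ∈ s then t i else univ with ht'
  have mt' : ∀ i, MeasurableSet (t' i) := by
    intro i; simp only [ht']; split_ifs; exacts [ht i, MeasurableSet.univ]
  have e1 : Set.pi (s : Set ℕ) t = Set.pi (Finset.range (N + 1) : Set ℕ) t' := by
    ext x
    simp only [Set.mem_pi, Finset.mem_coe, ht']
    constructor
    · intro h i _
      split_ifs with hi
      · exact h i hi
      · trivial
    · intro h i hi
      have := h i (hN' hi)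
      rwa [if_pos hi] at this
  have e2 : ∏ i ∈ s, Q (t i) = ∏ i ∈ Finset.range (N + 1), Q (t' i) := by
    rw [← Finset.prod_subset hN' (f := fun i => Q (t' i))]
    · exact Finset.prod_congr rfl fun i hi => by simp [ht', hi]
    · intro i _ hi; simp [ht', hi]
  rw [e1, e2, Measure.map_apply hm (MeasurableSet.pi (Finset.countable_toSet _) fun i _ => mt' i)]
  have e3 : (fun p : (ℕ → ℝ) × ℝ => (fun n : ℕ => Nat.casesOn n p.2 p.1 : ℕ → ℝ)) ⁻¹'
      Set.pi (Finset.range (N + 1) : Set ℕ) t'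
      = Set.pi (Finset.range N : Set ℕ) (fun i => t' (i + 1)) ×ˢ t' 0 := by
    ext p
    simp only [mem_preimage, Set.mem_pi, Finset.mem_coe, mem_prod, Finset.mem_range]
    constructor
    · intro h
      exact ⟨fun i hi => h (i + 1) (by omega), h 0 (by omega)⟩
    · rintro ⟨h1, h2⟩ i hi
      cases i with
      | zero => exact h2
      | succ i => exact h1 i (by omega)
  rw [e3, Measure.prod_prod, Measure.infinitePi_pi _ (fun i _ => mt' _), Finset.prod_range_succ']

/-- Perpetuity. -/
lemma tcp_perp (a d : ℝ) (ha0 : 0 < a) (ha1 : a < 1) (hd : 0 < d) :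
    ∃ Z : Measure ℝ, IsProbabilityMeasure Z ∧ (∀ᵐ w ∂Z, 0 ≤ w) ∧
      (Z.prod (ProbabilityTheory.expMeasure 1)).map (fun p => a * (p.1 + d * p.2)) = Z := by
  have hQ := tcp_exp_prob
  have hQ0 := tcp_exp_nonneg
  have hQm := tcp_exp_mean
  set Q := ProbabilityTheory.expMeasure 1 with hQd
  set P := Measure.infinitePi (fun _ : ℕ => Q) with hP
  let W : (ℕ → ℝ) → ENNReal := fun ω => ∑' j : ℕ, ENNReal.ofReal a ^ (j + 1) *
    ENNReal.ofReal (d * ω j)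
  have hW : Measurable W := by
    apply Measurable.tsum
    intro j
    fun_prop
  have hWi : ∫⁻ ω, W ω ∂P ≠ ⊤ := by
    have : ∫⁻ ω, W ω ∂P = ∑' j : ℕ, ENNReal.ofReal a ^ (j + 1) *
        (ENNReal.ofReal d * ∫⁻ e, ENNReal.ofReal e ∂Q) := by
      simp only [W]
      rw [lintegral_tsum (fun j => Measurable.aemeasurable (by fun_prop))]
      congr 1
      ext j
      rw [lintegral_const_mul _ (by fun_prop)]
      congr 1
      rw [← lintegral_const_mul _ (by fun_prop), ← (measurePreserving_eval_infinitePi (fun _ : ℕ => Q) j).map_eq, lintegral_map (by fun_prop) (by fun_prop)]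
      simp [ENNReal.ofReal_mul hd.le, hP]
    rw [this, ENNReal.tsum_mul_right]
    apply ENNReal.mul_ne_top _ (ENNReal.mul_ne_top ENNReal.ofReal_ne_top hQm)
    simp only [pow_succ]
    rw [ENNReal.tsum_mul_right, ENNReal.tsum_geometric]
    apply ENNReal.mul_ne_top _ ENNReal.ofReal_ne_top
    rw [ENNReal.inv_ne_top]
    exact (tsub_pos_of_lt (by simpa using ha1)).ne'
  have hWf : ∀ᵐ ω ∂P, W ω < ⊤ := ae_lt_top hW hWi
  have hWr : Measurable (fun ω => (W ω).toReal) := hW.ennreal_toReal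
  have hZp : IsProbabilityMeasure (P.map (fun ω => (W ω).toReal)) :=
    Measure.isProbabilityMeasure_map hWr.aemeasurable
  refine ⟨P.map (fun ω => (W ω).toReal), hZp, ?_, ?_⟩
  · rw [ae_map_iff hWr.aemeasurable measurableSet_Ici]
    exact Filter.Eventually.of_forall fun ω => ENNReal.toReal_nonneg
  · have hc := tcp_cons Q
    have hm : Measurable (fun p : (ℕ → ℝ) × ℝ => (fun n : ℕ => Nat.casesOn n p.2 p.1 : ℕ → ℝ)) := by
      rw [measurable_pi_iff]
      intro n
      cases n with
      | zero => exact measurable_snd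
      | succ n => exact (measurable_pi_apply n).comp measurable_fst
    have e1 : (P.map (fun ω => (W ω).toReal)).prod Q
        = (P.prod Q).map (Prod.map (fun ω => (W ω).toReal) id) := by
      rw [← Measure.map_prod_map _ _ hWr measurable_id, Measure.map_id]
    rw [e1, Measure.map_map (by fun_prop) (by fun_prop)]
    conv_rhs => rw [hP, ← hc, Measure.map_map hWr hm]
    apply Measure.map_congr
    have h1 : ∀ᵐ p ∂(P.prod Q), W p.1 < ⊤ := Measure.quasiMeasurePreserving_fst.ae hWf
    have h2 : ∀ᵐ p ∂(P.prod Q), 0 ≤ p.2 := Measure.quasiMeasurePreserving_snd.ae hQ0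
    filter_upwards [h1, h2] with p hp1 hp2
    have e2 : W (fun n : ℕ => Nat.casesOn n p.2 p.1)
        = ENNReal.ofReal a * ENNReal.ofReal (d * p.2) + ENNReal.ofReal a * W p.1 := by
      simp only [W]
      rw [tsum_eq_zero_add' ENNReal.summable, ← ENNReal.tsum_mul_left]
      congr 1
      · simp
      · congr 1
        ext j
        rw [pow_succ' _ (j + 1), mul_assoc]
    simp only [Function.comp, Prod.map, id]
    rw [e2, ENNReal.toReal_add (ENNReal.mul_ne_top ENNReal.ofReal_ne_top ENNReal.ofReal_ne_top)
      (ENNReal.mul_ne_top ENNReal.ofReal_ne_top hp1.ne), ENNReal.toReal_mul, ENNReal.toReal_mul,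
      ENNReal.toReal_ofReal ha0.le, ENNReal.toReal_ofReal (by positivity)]
    ring

noncomputable def tcpH (c β : ℝ) (p : ℝ × ℝ) : ℝ :=
  (1 - β) * (((p.1 ^ (1 / 4 : ℝ)) ^ 5 + 5 * c * p.2) ^ (1 / 5 : ℝ)) ^ (4 : ℝ)

lemma tcpH_meas (c β : ℝ) : Measurable (tcpH c β) := by
  unfold tcpH; fun_prop

lemma tcpH_nonneg (c β : ℝ) (hc : 0 < c) (hβ1 : β < 1) (p : ℝ × ℝ) (h1 : 0 ≤ p.1) (h2 : 0 ≤ p.2) :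
    0 ≤ tcpH c β p := by
  have : 0 ≤ 1 - β := by linarith
  unfold tcpH; positivity

lemma tcpH_root (c β : ℝ) (hc : 0 < c) (hβ1 : β < 1) (p : ℝ × ℝ) (h1 : 0 ≤ p.1) (h2 : 0 ≤ p.2) :
    (tcpH c β p) ^ (1 / 4 : ℝ)
      = (1 - β) ^ (1 / 4 : ℝ) * ((p.1 ^ (1 / 4 : ℝ)) ^ 5 + 5 * c * p.2) ^ (1 / 5 : ℝ) := by
  have : 0 ≤ 1 - β := by linarith
  unfold tcpH
  rw [Real.mul_rpow this (by positivity), ← Real.rpow_mul (by positivity)]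
  norm_num

lemma tcp_fifth (b : ℝ) (hb : 0 ≤ b) : (b ^ (1 / 5 : ℝ)) ^ 5 = b := by
  rw [← Real.rpow_natCast, ← Real.rpow_mul hb]; norm_num

lemma tcp_subadd (u b : ℝ) (hu : 0 ≤ u) (hb : 0 ≤ b) :
    (u ^ 5 + b) ^ (1 / 5 : ℝ) ≤ u + b ^ (1 / 5 : ℝ) := by
  rw [← pow_le_pow_iff_left₀ (by positivity) (by positivity) (by norm_num : (5:ℕ) ≠ 0),
    tcp_fifth _ (by positivity)]
  have h := tcp_fifth b hb
  set w := b ^ (1 / 5 : ℝ)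
  have hw : 0 ≤ w := by positivity
  rw [← h]
  have : 0 ≤ 5 * u ^ 4 * w + 10 * u ^ 3 * w ^ 2 + 10 * u ^ 2 * w ^ 3 + 5 * u * w ^ 4 := by positivity
  nlinarith [this]

lemma tcp_prod_ae (μ : Measure ℝ) [IsProbabilityMeasure μ] (hμ : ∀ᵐ v ∂μ, 0 ≤ v) :
    ∀ᵐ p ∂(μ.prod (ProbabilityTheory.expMeasure 1)), 0 ≤ p.1 ∧ 0 ≤ p.2 := by
  have := tcp_exp_prob
  have h1 : ∀ᵐ p ∂(μ.prod (ProbabilityTheory.expMeasure 1)), 0 ≤ p.1 :=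
    Measure.quasiMeasurePreserving_fst.ae hμ
  have h2 : ∀ᵐ p ∂(μ.prod (ProbabilityTheory.expMeasure 1)), 0 ≤ p.2 :=
    Measure.quasiMeasurePreserving_snd.ae tcp_exp_nonneg
  filter_upwards [h1, h2] with p a b using ⟨a, b⟩

lemma tcp_dom_step (c β : ℝ) (hc : 0 < c) (hβ1 : β < 1) (μ ρ : Measure ℝ)
    [IsProbabilityMeasure μ] [IsProbabilityMeasure ρ] (hμ : ∀ᵐ v ∂μ, 0 ≤ v)
    (h : ∀ y : ℝ, μ {v : ℝ | y < v ^ (1 / 4 : ℝ)} ≤ ρ (Ioi y)) (y : ℝ) :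
    ((μ.prod (ProbabilityTheory.expMeasure 1)).map (tcpH c β)) {v : ℝ | y < v ^ (1 / 4 : ℝ)}
      ≤ ((ρ.prod (ProbabilityTheory.expMeasure 1)).map
        (fun p => (1 - β) ^ (1 / 4 : ℝ) * (p.1 + (5 * c * p.2) ^ (1 / 5 : ℝ)))) (Ioi y) := by
  have := tcp_exp_prob
  have hg : 0 < (1 - β) ^ (1 / 4 : ℝ) := Real.rpow_pos_of_pos (by linarith) _
  have hS : MeasurableSet {v : ℝ | y < v ^ (1 / 4 : ℝ)} :=
    measurableSet_lt (by fun_prop) (by fun_prop)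
  rw [Measure.map_apply (tcpH_meas c β) hS, Measure.map_apply (by fun_prop) measurableSet_Ioi]
  set γ := (1 - β) ^ (1 / 4 : ℝ) with hγ
  have hT : MeasurableSet {p : ℝ × ℝ | y < γ * (p.1 ^ (1 / 4 : ℝ) + (5 * c * p.2) ^ (1 / 5 : ℝ))} :=
    measurableSet_lt (by fun_prop) (by fun_prop)
  have hT' : MeasurableSet ((fun p : ℝ × ℝ => γ * (p.1 + (5 * c * p.2) ^ (1 / 5 : ℝ))) ⁻¹' Ioi y) :=
    (by fun_prop : Measurable (fun p : ℝ × ℝ => γ * (p.1 + (5 * c * p.2) ^ (1 / 5 : ℝ))))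
      measurableSet_Ioi
  calc _ ≤ (μ.prod (ProbabilityTheory.expMeasure 1))
        {p : ℝ × ℝ | y < γ * (p.1 ^ (1 / 4 : ℝ) + (5 * c * p.2) ^ (1 / 5 : ℝ))} := by
        apply measure_mono_ae
        filter_upwards [tcp_prod_ae μ hμ] with p hp hy
        change y < (tcpH c β p) ^ (1 / 4 : ℝ) at hy
        rw [tcpH_root c β hc hβ1 p hp.1 hp.2] at hy
        change y < _
        have hp2 := hp.2
        refine hy.trans_le (mul_le_mul_of_nonneg_left ?_ hg.le)
        exact tcp_subadd _ _ (Real.rpow_nonneg hp.1 _) (by positivity)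
    _ ≤ _ := by
        rw [Measure.prod_apply_symm hT, Measure.prod_apply_symm hT']
        apply lintegral_mono
        intro e
        have e1 : ∀ z : ℝ, y < γ * (z + (5 * c * e) ^ (1 / 5 : ℝ)) ↔
            y / γ - (5 * c * e) ^ (1 / 5 : ℝ) < z := by
          intro z
          rw [sub_lt_iff_lt_add, div_lt_iff₀' hg]
        have e2 := h (y / γ - (5 * c * e) ^ (1 / 5 : ℝ))
        refine le_trans (measure_mono ?_) (e2.trans (measure_mono ?_))
        · intro z hz
          exact (e1 _).1 hz
        · intro z hz
          exact (e1 _).2 hz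

lemma tcp_mom_step (c β : ℝ) (hc : 0 < c) (hβ1 : β < 1) (μ : Measure ℝ)
    [IsProbabilityMeasure μ] (hμ : ∀ᵐ v ∂μ, 0 ≤ v) :
    ∫⁻ v, ENNReal.ofReal ((v ^ (1 / 4 : ℝ)) ^ 5)
        ∂((μ.prod (ProbabilityTheory.expMeasure 1)).map (tcpH c β))
      = ENNReal.ofReal (((1 - β) ^ (1 / 4 : ℝ)) ^ 5) *
        (∫⁻ v, ENNReal.ofReal ((v ^ (1 / 4 : ℝ)) ^ 5) ∂μ + ENNReal.ofReal (5 * c) *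
          ∫⁻ e, ENNReal.ofReal e ∂(ProbabilityTheory.expMeasure 1)) := by
  have := tcp_exp_prob
  have hg : 0 < (1 - β) ^ (1 / 4 : ℝ) := Real.rpow_pos_of_pos (by linarith) _
  rw [lintegral_map (by fun_prop) (tcpH_meas c β)]
  set γ := (1 - β) ^ (1 / 4 : ℝ) with hγ
  have e1 : ∫⁻ p, ENNReal.ofReal ((tcpH c β p ^ (1 / 4 : ℝ)) ^ 5)
        ∂(μ.prod (ProbabilityTheory.expMeasure 1))
      = ∫⁻ p, ENNReal.ofReal (γ ^ 5) * (ENNReal.ofReal ((p.1 ^ (1 / 4 : ℝ)) ^ 5)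
          + ENNReal.ofReal (5 * c) * ENNReal.ofReal p.2)
        ∂(μ.prod (ProbabilityTheory.expMeasure 1)) := by
    apply lintegral_congr_ae
    filter_upwards [tcp_prod_ae μ hμ] with p hp
    have hp1 := hp.1
    have hp2 := hp.2
    rw [tcpH_root c β hc hβ1 p hp.1 hp.2, mul_pow, tcp_fifth _ (by positivity),
      ENNReal.ofReal_mul (by positivity), ENNReal.ofReal_add (by positivity) (by positivity),
      ENNReal.ofReal_mul (by positivity : 0 ≤ 5 * c)]
  rw [e1, lintegral_const_mul _ (by fun_prop), lintegral_add_left (by fun_prop),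
    lintegral_const_mul _ (by fun_prop)]
  have f1 := (measurePreserving_fst (μ := μ) (ν := ProbabilityTheory.expMeasure 1)).lintegral_comp
      (f := fun v => ENNReal.ofReal ((v ^ (1 / 4 : ℝ)) ^ 5)) (by fun_prop)
  have f2 := (measurePreserving_snd (μ := μ) (ν := ProbabilityTheory.expMeasure 1)).lintegral_comp
      (f := fun v => ENNReal.ofReal v) (by fun_prop)
  rw [f1, f2]

lemma tcp_tight (μ : Measure ℝ) (B ε : ℝ) (hB0 : 0 ≤ B) (hε : 0 < ε)
    (hB : ∫⁻ v, ENNReal.ofReal ((v ^ (1 / 4 : ℝ)) ^ 5) ∂μ ≤ ENNReal.ofReal B) :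
    (μ (Ioi ((B / ε + 1) ^ 4))).toReal ≤ ε := by
  set T := B / ε + 1 with hT
  have hT1 : 1 ≤ T := by have : 0 ≤ B / ε := by positivity
                         linarith
  have h1 : μ (Ioi (T ^ 4)) ≤ μ {v | ENNReal.ofReal T ≤ ENNReal.ofReal ((v ^ (1 / 4 : ℝ)) ^ 5)} := by
    apply measure_mono
    intro v hv
    apply ENNReal.ofReal_le_ofReal
    have hv' : T ^ 4 < v := hv
    have : T ≤ v ^ (1 / 4 : ℝ) := by
      have h2 : T = (T ^ 4) ^ (1 / 4 : ℝ) := by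
        rw [← Real.rpow_natCast, ← Real.rpow_mul (by linarith)]; norm_num
      rw [h2]
      exact Real.rpow_le_rpow (by positivity) hv'.le (by norm_num)
    calc T ≤ T ^ 5 := le_self_pow₀ hT1 (by norm_num)
      _ ≤ _ := by gcongr
  have h2 := meas_ge_le_lintegral_div (μ := μ)
    (f := fun v => ENNReal.ofReal ((v ^ (1 / 4 : ℝ)) ^ 5)) (by fun_prop)
    (ε := ENNReal.ofReal T) (by simp; linarith) ENNReal.ofReal_ne_top
  have h3 : μ (Ioi (T ^ 4)) ≤ ENNReal.ofReal ε := by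
    refine (h1.trans h2).trans ((ENNReal.div_le_div_right hB _).trans ?_)
    rw [← ENNReal.ofReal_div_of_pos (by linarith)]
    apply ENNReal.ofReal_le_ofReal
    rw [div_le_iff₀ (by linarith), hT, mul_add, mul_div_cancel₀ _ hε.ne']
    linarith
  exact ENNReal.toReal_le_of_le_ofReal hε.le h3

lemma tcp_kV (α β k : ℝ) (hk : k = 3 / 4) (hα : 0 < α)
    (ν : ℝ → Measure ℝ) (hνprob : ∀ x, IsProbabilityMeasure (ν x))
    (hccdf : ∀ x : ℝ, 0 ≤ x → ∀ y : ℝ, 0 ≤ y →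
      ((ν x) (Ici y)).toReal
        = Real.exp (-(x * y + 2 * α * (1 - k) * x ^ k * y ^ 2
            + 2 * α ^ 2 * (1 - k) ^ 2 * x ^ (2 * k - 1) * y ^ 3
            + α ^ 3 * (1 - k) ^ 3 * x ^ (3 * k - 2) * y ^ 4
            + α ^ 4 * (1 - k) ^ 4 * x ^ (4 * k - 3) * y ^ 5 / 5))) (x : ℝ) (hx : 0 ≤ x) :
    ν x = (ProbabilityTheory.expMeasure 1).map
      (fun e => (((x ^ (1 / 4 : ℝ)) ^ 5 + 5 * (α * (1 - k)) * e) ^ (1 / 5 : ℝ) - x ^ (1 / 4 : ℝ))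
        / (α * (1 - k))) := by
  have := hνprob x
  have hc : 0 < α * (1 - k) := by rw [hk]; linarith
  apply tcp_nu_eq _ _ hc (by positivity)
  intro y hy
  rw [hccdf x hx y hy]
  congr 2
  have e0 : x = (x ^ (1 / 4 : ℝ)) ^ 4 := by
    rw [← Real.rpow_natCast, ← Real.rpow_mul hx]; norm_num
  have e1 : x ^ k = (x ^ (1 / 4 : ℝ)) ^ 3 := by
    rw [← Real.rpow_natCast, ← Real.rpow_mul hx, hk]; norm_num
  have e2 : x ^ (2 * k - 1) = (x ^ (1 / 4 : ℝ)) ^ 2 := by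
    rw [← Real.rpow_natCast, ← Real.rpow_mul hx, hk]; norm_num
  have e3 : x ^ (3 * k - 2) = x ^ (1 / 4 : ℝ) := by
    rw [hk]; norm_num
  have e4 : x ^ (4 * k - 3) = 1 := by
    rw [hk]; norm_num
  rw [e1, e2, e3, e4]
  generalize x ^ (1 / 4 : ℝ) = u at *
  rw [e0, eq_div_iff (by positivity)]
  ring

/-- The limiting post-loss window chain V̄ of TCP Compound: V̄_n^{1-k} is
stochastically dominated by the contractive affine chain X_n driven by
i.i.d. copies of Ḡ_0; hence the Cesàro averages of the laws of V̄_n are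
tight and V̄ admits an invariant probability distribution. -/
theorem tcp_compound_limit_chain_invariant_distribution
    (α β k : ℝ) (hk : k = 3 / 4) (hα : 0 < α) (hβ0 : 0 < β) (hβ1 : β < 1)
    (ν : ℝ → Measure ℝ) (hνprob : ∀ x, IsProbabilityMeasure (ν x))
    (hccdf : ∀ x : ℝ, 0 ≤ x → ∀ y : ℝ, 0 ≤ y →
      ((ν x) (Ici y)).toReal
        = Real.exp (-(x * y + 2 * α * (1 - k) * x ^ k * y ^ 2
            + 2 * α ^ 2 * (1 - k) ^ 2 * x ^ (2 * k - 1) * y ^ 3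
            + α ^ 3 * (1 - k) ^ 3 * x ^ (3 * k - 2) * y ^ 4
            + α ^ 4 * (1 - k) ^ 4 * x ^ (4 * k - 3) * y ^ 5 / 5)))
    (κV κX : ℝ → Measure ℝ)
    (hκV : ∀ x : ℝ, κV x
      = (ν x).map (fun g => (1 - β) * (x ^ (1 - k) + α * (1 - k) * g) ^ (1 / (1 - k))))
    (hκX : ∀ x : ℝ, κX x
      = (ν 0).map (fun g => (1 - β) ^ (1 - k) * (x + α * (1 - k) * g)))
    (μV μX : ℝ → ℕ → Measure ℝ)
    (hV0 : ∀ x, μV x 0 = Measure.dirac x) (hVS : ∀ x n, μV x (n + 1) = (μV x n).bind κV)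
    (hX0 : ∀ x, μX x 0 = Measure.dirac x) (hXS : ∀ x n, μX x (n + 1) = (μX x n).bind κX) :
    (∀ x : ℝ, 0 ≤ x → ∀ n : ℕ, ∀ y : ℝ,
      ((μV x n) {v : ℝ | y < v ^ (1 - k)}).toReal
        ≤ ((μX (x ^ (1 - k)) n) (Ioi y)).toReal) ∧
    (∀ x : ℝ, 0 ≤ x → ∀ ε : ℝ, 0 < ε → ∃ K : ℝ, ∀ n : ℕ, 1 ≤ n →
      (1 / (n : ℝ)) * ∑ i ∈ Finset.Icc 1 n, ((μV x i) (Ioi K)).toReal ≤ ε) ∧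
    (∃ pi0 : Measure ℝ, IsProbabilityMeasure pi0 ∧ pi0.bind κV = pi0) := by
  have hQ := tcp_exp_prob
  have hc : 0 < α * (1 - k) := by rw [hk]; linarith
  have hν := tcp_kV α β k hk hα ν hνprob hccdf
  have h14 : 1 - k = 1 / 4 := by rw [hk]; norm_num
  have hg : 0 < (1 - β) ^ (1 / 4 : ℝ) := Real.rpow_pos_of_pos (by linarith) _
  have hg1 : (1 - β) ^ (1 / 4 : ℝ) < 1 :=
    Real.rpow_lt_one (by linarith) (by linarith) (by norm_num)
  generalize hcd : α * (1 - k) = c at *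
  have hVk : ∀ x : ℝ, 0 ≤ x →
      κV x = (ProbabilityTheory.expMeasure 1).map (fun e => tcpH c β (x, e)) := by
    intro x hx
    rw [hκV, hν x hx, Measure.map_map (by fun_prop) (by fun_prop)]
    congr 1
    ext e
    simp only [Function.comp, tcpH, h14]
    rw [mul_div_cancel₀ _ hc.ne']
    norm_num
  have hXk : ∀ x : ℝ, κX x = (ProbabilityTheory.expMeasure 1).map
      (fun e => (fun p : ℝ × ℝ => (1 - β) ^ (1 / 4 : ℝ) * (p.1 + (5 * c * p.2) ^ (1 / 5 : ℝ)))
        (x, e)) := by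
    intro x
    rw [hκX, hν 0 le_rfl, Measure.map_map (by fun_prop) (by fun_prop)]
    congr 1
    ext e
    simp only [Function.comp, h14]
    rw [mul_div_cancel₀ _ hc.ne']
    norm_num
  have hbV : ∀ μ : Measure ℝ, IsProbabilityMeasure μ → (∀ᵐ v ∂μ, 0 ≤ v) →
      μ.bind κV = (μ.prod (ProbabilityTheory.expMeasure 1)).map (tcpH c β) := by
    intro μ hμ h0
    exact tcp_bind_eq μ κV _ (tcpH_meas c β) (h0.mono hVk)
  have hbX : ∀ μ : Measure ℝ, IsProbabilityMeasure μ →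
      μ.bind κX = (μ.prod (ProbabilityTheory.expMeasure 1)).map
        (fun p : ℝ × ℝ => (1 - β) ^ (1 / 4 : ℝ) * (p.1 + (5 * c * p.2) ^ (1 / 5 : ℝ))) := by
    intro μ hμ
    exact tcp_bind_eq μ κX _ (by fun_prop) (Filter.Eventually.of_forall hXk)
  have hVp : ∀ x : ℝ, 0 ≤ x → ∀ n, IsProbabilityMeasure (μV x n) ∧ ∀ᵐ v ∂(μV x n), 0 ≤ v := by
    intro x hx n
    induction n with
    | zero =>
      rw [hV0]
      refine ⟨inferInstance, ?_⟩
      rw [ae_dirac_iff measurableSet_Ici]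
      exact hx
    | succ n ih =>
      obtain ⟨i1, i2⟩ := ih
      rw [hVS, hbV _ i1 i2]
      refine ⟨Measure.isProbabilityMeasure_map (tcpH_meas c β).aemeasurable, ?_⟩
      rw [ae_map_iff (tcpH_meas c β).aemeasurable measurableSet_Ici]
      filter_upwards [tcp_prod_ae _ i2] with p hp using tcpH_nonneg c β hc hβ1 p hp.1 hp.2
  have hXp : ∀ x : ℝ, ∀ n, IsProbabilityMeasure (μX x n) := by
    intro x n
    induction n with
    | zero => rw [hX0]; infer_instance
    | succ n ih =>
      rw [hXS, hbX _ ih]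
      exact Measure.isProbabilityMeasure_map (Measurable.aemeasurable (by fun_prop))
  rw [h14]
  refine ⟨?_, ?_, ?_⟩
  · intro x hx n y
    have key : ∀ y : ℝ, (μV x n) {v : ℝ | y < v ^ (1 / 4 : ℝ)}
        ≤ (μX (x ^ (1 / 4 : ℝ)) n) (Ioi y) := by
      induction n with
      | zero =>
        intro y
        rw [hV0, hX0, Measure.dirac_apply' _ measurableSet_Ioi,
          Measure.dirac_apply' _ (measurableSet_lt (by fun_prop) (by fun_prop))]
        exact le_of_eq rfl
      | succ n ih =>
        intro y
        obtain ⟨i1, i2⟩ := hVp x hx n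
        have i3 := hXp (x ^ (1 / 4 : ℝ)) n
        rw [hVS, hXS, hbV _ i1 i2, hbX _ i3]
        exact tcp_dom_step c β hc hβ1 _ _ i2 ih y
    have := hXp (x ^ (1 / 4 : ℝ)) n
    exact ENNReal.toReal_mono (measure_ne_top _ _) (key y)
  · intro x hx ε hε
    have hM := tcp_exp_mean
    obtain ⟨M, hM0, hMe⟩ : ∃ M : ℝ, 0 ≤ M ∧
        ENNReal.ofReal (5 * c) * ∫⁻ e, ENNReal.ofReal e ∂(ProbabilityTheory.expMeasure 1)
          = ENNReal.ofReal M :=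
      ⟨_, ENNReal.toReal_nonneg,
        (ENNReal.ofReal_toReal (ENNReal.mul_ne_top ENNReal.ofReal_ne_top hM)).symm⟩
    set a := ((1 - β) ^ (1 / 4 : ℝ)) ^ 5 with ha
    have ha0 : 0 < a := by positivity
    have ha1 : a < 1 := pow_lt_one₀ hg.le hg1 (by norm_num)
    have ha1' : 0 < 1 - a := by linarith
    set B := (x ^ (1 / 4 : ℝ)) ^ 5 + a * M / (1 - a) with hB
    have hB0 : 0 ≤ B := by positivity
    have hmom : ∀ n, ∫⁻ v, ENNReal.ofReal ((v ^ (1 / 4 : ℝ)) ^ 5) ∂(μV x n)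
        ≤ ENNReal.ofReal B := by
      intro n
      induction n with
      | zero =>
        rw [hV0, lintegral_dirac' _ (by fun_prop)]
        apply ENNReal.ofReal_le_ofReal
        have : 0 ≤ a * M / (1 - a) := by positivity
        linarith
      | succ n ih =>
        obtain ⟨i1, i2⟩ := hVp x hx n
        rw [hVS, hbV _ i1 i2, tcp_mom_step c β hc hβ1 _ i2, hMe]
        refine (mul_le_mul_right (add_le_add_left ih _) _).trans ?_
        rw [← ENNReal.ofReal_add hB0 hM0, ← ENNReal.ofReal_mul ha0.le]
        apply ENNReal.ofReal_le_ofReal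
        have e1 : a * M / (1 - a) = a * (a * M / (1 - a) + M) := by field_simp; ring
        have e2 : a * (x ^ (1 / 4 : ℝ)) ^ 5 ≤ (x ^ (1 / 4 : ℝ)) ^ 5 :=
          mul_le_of_le_one_left (by positivity) ha1.le
        rw [hB]
        linarith
    refine ⟨(B / ε + 1) ^ 4, fun n hn => ?_⟩
    have hn' : (0:ℝ) < n := by exact_mod_cast hn
    have hs : ∑ i ∈ Finset.Icc 1 n, ((μV x i) (Ioi ((B / ε + 1) ^ 4))).toReal
        ≤ ∑ i ∈ Finset.Icc 1 n, ε :=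
      Finset.sum_le_sum fun i _ => tcp_tight _ B ε hB0 hε (hmom i)
    rw [Finset.sum_const, Nat.card_Icc, nsmul_eq_mul, Nat.add_sub_cancel] at hs
    rw [one_div, inv_mul_le_iff₀ hn']
    exact hs
  · have ha0 : 0 < ((1 - β) ^ (1 / 4 : ℝ)) ^ 5 := by positivity
    have ha1 : ((1 - β) ^ (1 / 4 : ℝ)) ^ 5 < 1 := pow_lt_one₀ hg.le hg1 (by norm_num)
    obtain ⟨Z, hZ, hZ0, hZe⟩ := tcp_perp _ (5 * c) ha0 ha1 (by positivity)
    have hm : Measurable (fun w : ℝ => w ^ (4 / 5 : ℝ)) := by fun_prop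
    have hp : IsProbabilityMeasure (Z.map (fun w : ℝ => w ^ (4 / 5 : ℝ))) :=
      Measure.isProbabilityMeasure_map hm.aemeasurable
    refine ⟨Z.map (fun w : ℝ => w ^ (4 / 5 : ℝ)), hp, ?_⟩
    rw [hbV _ hp]
    · have e1 : (Z.map (fun w : ℝ => w ^ (4 / 5 : ℝ))).prod (ProbabilityTheory.expMeasure 1)
          = (Z.prod (ProbabilityTheory.expMeasure 1)).map
            (Prod.map (fun w : ℝ => w ^ (4 / 5 : ℝ)) id) := by
        rw [← Measure.map_prod_map _ _ hm measurable_id, Measure.map_id]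
      rw [e1, Measure.map_map (tcpH_meas c β) (by fun_prop)]
      conv_rhs => rw [← hZe, Measure.map_map hm (by fun_prop)]
      apply Measure.map_congr
      filter_upwards [tcp_prod_ae Z hZ0] with p hp
      obtain ⟨p1, p2⟩ := hp
      have hb : 0 ≤ 1 - β := by linarith
      simp only [Function.comp, tcpH, Prod.map, id]
      have e2 : ((p.1 ^ (4 / 5 : ℝ)) ^ (1 / 4 : ℝ)) ^ 5 = p.1 := by
        rw [← Real.rpow_natCast, ← Real.rpow_mul p1, ← Real.rpow_mul p1]; norm_num
      have e3 : (((1 - β) ^ (1 / 4 : ℝ)) ^ 5) ^ (4 / 5 : ℝ) = 1 - β := by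
        rw [← Real.rpow_natCast, ← Real.rpow_mul hb, ← Real.rpow_mul hb]; norm_num
      rw [e2, Real.mul_rpow ha0.le (by positivity), e3, ← Real.rpow_mul (by positivity)]
      norm_num
    · rw [ae_map_iff hm.aemeasurable measurableSet_Ici]
      filter_upwards [hZ0] with w hw using Real.rpow_nonneg hw _
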